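/- Let A be a unital C*-algebra with unitary group U(A), s a fixed nonzero complex number with |s| < 1, r > 2 a real number, and θ ≥ 0. Suppose f : A³ → A satisfies f(x, 0, a) = f(0, z, a) = f(x, z, 0) = 0 for all x, z, a ∈ A and, for all λ, μ, η ∈ T¹ and all x, y, z, w, a, b ∈ A, ‖f(λ(x+y), μ(z−w), η(a+b)) + f(λ(x−y), μ(z+w), η(a−b)) − λμη(2f(x,z,a) − 2f(x,w,b) + 2f(y,z,b) − 2f(y,w,a))‖ ≤ ‖s · D₂f(x, y, z, w, a, b)‖ + θ(‖x‖^r + ‖y‖^r)(‖z‖^r + ‖w‖^r)(‖a‖^r + ‖b‖^r). Then there exists a unique ℂ-trilinear mapping D : A³ → A such that ‖f(x, z, a) − D(x, z, a)‖ ≤ (2θ/(2^r − 2)) ‖x‖^r ‖z‖^r ‖a‖^r for all x, z, a ∈ A. If, in addition, f satisfies ‖f(x_{σ(1)}, x_{σ(2)}, x_{σ(3)}) − f(x₁, x₂, x₃)‖ ≤ θ ‖x₁‖^r ‖x₂‖^r ‖x₃‖^r for all x₁, x₂, x₃ ∈ A and every permutation (σ(1), σ(2), σ(3)) of (1,2,3),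 and ‖f(uy, z, a) − f(u, z, a)y − u f(y, z, a)‖ ≤ θ(1 + ‖y‖^r)‖z‖^r ‖a‖^r for all u ∈ U(A) and all y, z, a ∈ A, then D is a permuting triderivation. -/

import Mathlib

/-!
Taking `y = x` and `w = b = 0` makes `D₂ f` vanish and gives
`‖f (2x) z a - 2 f x z a‖ ≤ 2θ ‖x‖^r ‖z‖^r ‖a‖^r`. Hence `2^n f (x / 2^n) z a` is Cauchy with
ratio `2 / 2^r < 1`, and its limit `D` satisfies the stated estimate (`exists_limit`).

In the limit the `θ`-term disappears. Since `D` is homogeneous under doubling in its first variable,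
`D₂ D` is the expression bounded on the left at `λ = μ = η = 1`; as `‖s‖ < 1` it is zero, so the
left-hand side is zero for all unimodular `λ, μ, η`. Setting variables to zero leaves Jensen's
equation in each variable (`additive_of_jensen`) and homogeneity over the circle, and an additive map
homogeneous over the circle is `ℂ`-linear, because every `t ∈ [0, 2]` is a sum of two unimodular
numbers (`smul_of_unimodular`).

Every other claim (uniqueness, symmetry, Leibniz rule for unitary `u`) follows from one principle:
a `ℂ`-homogeneous map bounded by `K ‖x‖^r` with `r > 1` vanishes (`eq_zero_of_bound`). The Leibniz
rule extends to all of `A` because the unitaries span a unital C*-algebra.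
-/


/-- A mapping `f : X³ → Y` is *tri-additive* if it is additive in each variable. -/
def TriAdditive {X Y : Type*} [AddCommGroup X] [AddCommGroup Y]
    (f : X → X → X → Y) : Prop :=
  (∀ x x' z a : X, f (x + x') z a = f x z a + f x' z a) ∧
  (∀ x z z' a : X, f x (z + z') a = f x z a + f x z' a) ∧
  (∀ x z a a' : X, f x z (a + a') = f x z a + f x z a')

/-- A mapping `f : X³ → Y` is *ℂ-trilinear* if it is ℂ-linear in each variable. -/
def CTrilinear {X Y : Type*} [AddCommGroup X] [Module ℂ X] [AddCommGroup Y] [Module ℂ Y]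
    (f : X → X → X → Y) : Prop :=
  TriAdditive f ∧
  (∀ (c : ℂ) (x z a : X), f (c • x) z a = c • f x z a) ∧
  (∀ (c : ℂ) (x z a : X), f x (c • z) a = c • f x z a) ∧
  (∀ (c : ℂ) (x z a : X), f x z (c • a) = c • f x z a)

/-- `D₁f(x, y, z, w, a, b)`. -/
def D₁ {X Y : Type*} [AddCommGroup X] [Module ℂ X] [AddCommGroup Y] [Module ℂ Y]
    (f : X → X → X → Y) (x y z w a b : X) : Y :=
  f (x + y) (z - w) (a + b) + f (x - y) (z + w) (a - b)
    - (2 : ℂ) • f x z a + (2 : ℂ) • f x w b - (2 : ℂ) • f y z b + (2 : ℂ) • f y w a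

/-- `D₂f(x, y, z, w, a, b)`. -/
noncomputable def D₂ {X Y : Type*} [AddCommGroup X] [Module ℂ X] [AddCommGroup Y] [Module ℂ Y]
    (f : X → X → X → Y) (x y z w a b : X) : Y :=
  (2 : ℂ) • f ((2 : ℂ)⁻¹ • (x + y)) (z - w) (a + b)
    + (2 : ℂ) • f ((2 : ℂ)⁻¹ • (x - y)) (z + w) (a - b)
    - (2 : ℂ) • f x z a + (2 : ℂ) • f x w b - (2 : ℂ) • f y z b + (2 : ℂ) • f y w a


/-- A ℂ-trilinear `D : A³ → A` is a *permuting triderivation* if it is a derivation in the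
first variable and is invariant under every permutation of its three variables. -/
def PermutingTriderivation {A : Type*} [Ring A] [Module ℂ A]
    (D : A → A → A → A) : Prop :=
  CTrilinear D ∧
  (∀ x y z w : A, D (x * y) z w = D x z w * y + x * D y z w) ∧
  (∀ (σ : Equiv.Perm (Fin 3)) (x : Fin 3 → A),
    D (x (σ 0)) (x (σ 1)) (x (σ 2)) = D (x 0) (x 1) (x 2))

variable {A : Type*} [NormedRing A] [StarRing A] [CStarRing A]
  [NormedAlgebra ℂ A] [StarModule ℂ A] [CompleteSpace A]

lemma smul_of_unimodular {X Y : Type*} [AddCommGroup X] [Module ℂ X] [AddCommGroup Y] [Module ℂ Y]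
    (φ : X → Y) (hadd : ∀ x y, φ (x + y) = φ x + φ y)
    (hu : ∀ c : ℂ, ‖c‖ = 1 → ∀ x, φ (c • x) = c • φ x) (c : ℂ) (x : X) : φ (c • x) = c • φ x := by
  have h0 : φ 0 = 0 := by simpa using hadd 0 0
  have hnat : ∀ (n : ℕ) (x : X), φ ((n : ℂ) • x) = (n : ℂ) • φ x := by
    intro n x
    induction n with
    | zero => simp [h0]
    | succ k ih => simp only [Nat.cast_succ, add_smul, one_smul, hadd, ih]
  -- A real `t ∈ [0, 2]` is `u + conj u` with `u = t/2 + i √(1 - (t/2)²)` on the unit circle.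
  have hreal : ∀ t : ℝ, 0 ≤ t → t ≤ 2 → ∀ x : X, φ ((t : ℂ) • x) = (t : ℂ) • φ x := by
    intro t ht0 ht2 x
    have hpos : 0 ≤ 1 - (t / 2) ^ 2 := by nlinarith
    have hn : ∀ ε : ℝ, ε ^ 2 = 1 → ‖(⟨t / 2, ε * √(1 - (t / 2) ^ 2)⟩ : ℂ)‖ = 1 := by
      intro ε hε
      rw [← sq_eq_sq₀ (norm_nonneg _) zero_le_one, Complex.sq_norm, Complex.normSq_mk]
      have := Real.sq_sqrt hpos
      linear_combination ε ^ 2 * this + (1 - (t / 2) ^ 2) * hε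
    have hsum : (t : ℂ) = ⟨t / 2, 1 * √(1 - (t / 2) ^ 2)⟩ + ⟨t / 2, (-1) * √(1 - (t / 2) ^ 2)⟩ := by
      apply Complex.ext <;> simp
    rw [hsum, add_smul, hadd, hu _ (hn 1 (by norm_num)), hu _ (hn (-1) (by norm_num)), ← add_smul]
  by_cases hc : c = 0
  · simp [hc, h0]
  have hc' : (‖c‖ : ℂ) ≠ 0 := by exact_mod_cast norm_ne_zero_iff.mpr hc
  obtain ⟨n, hn⟩ := exists_nat_gt ‖c‖
  have hn0 : (0 : ℝ) < n := (norm_nonneg c).trans_lt hn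
  have hnC : (n : ℂ) ≠ 0 := by exact_mod_cast hn0.ne'
  have hω : ‖c / ‖c‖‖ = 1 := by
    rw [norm_div, Complex.norm_real, norm_norm, div_self (norm_ne_zero_iff.mpr hc)]
  have hdec : c = (n : ℂ) * (((‖c‖ / n : ℝ) : ℂ) * (c / ‖c‖)) := by
    push_cast
    field_simp
  have ht2 : ‖c‖ / n ≤ 2 := by
    rw [div_le_iff₀ hn0]
    linarith
  rw [hdec, mul_smul, hnat, mul_smul, hreal _ (by positivity) ht2, hu _ hω, smul_smul, smul_smul,
    mul_assoc]

lemma additive_of_jensen {X Y : Type*} [AddCommGroup X] [Module ℂ X] [AddCommGroup Y] [Module ℂ Y]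
    (φ : X → Y) (h0 : φ 0 = 0) (h : ∀ x y, φ (x + y) + φ (x - y) = (2 : ℂ) • φ x) (x y : X) :
    φ (x + y) = φ x + φ y := by
  have h1 := h ((2 : ℂ)⁻¹ • (x + y)) ((2 : ℂ)⁻¹ • (x + y))
  have h2 := h ((2 : ℂ)⁻¹ • (x + y)) ((2 : ℂ)⁻¹ • (x - y))
  have e1 : (2 : ℂ)⁻¹ • (x + y) + (2 : ℂ)⁻¹ • (x + y) = x + y := by module
  have e2 : (2 : ℂ)⁻¹ • (x + y) + (2 : ℂ)⁻¹ • (x - y) = x := by module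
  have e3 : (2 : ℂ)⁻¹ • (x + y) - (2 : ℂ)⁻¹ • (x - y) = y := by module
  rw [e1, sub_self, h0, add_zero] at h1
  rw [e2, e3] at h2
  rw [h1, h2]

lemma norm_half_pow_smul_rpow {X : Type*} [NormedAddCommGroup X] [NormedSpace ℂ X] (r : ℝ) (n : ℕ)
    (x : X) : ‖((2 : ℂ)⁻¹ ^ n) • x‖ ^ r = ((2 : ℝ) ^ r)⁻¹ ^ n * ‖x‖ ^ r := by
  rw [norm_smul, Real.mul_rpow (norm_nonneg _) (norm_nonneg _), norm_pow, norm_inv]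
  congr 1
  rw [show ‖(2 : ℂ)‖ = 2 by simp, ← Real.rpow_natCast, ← Real.rpow_mul (by norm_num), mul_comm,
    Real.rpow_mul (by norm_num), Real.rpow_natCast, Real.inv_rpow (by norm_num)]

lemma two_lt_two_rpow {r : ℝ} (hr : 1 < r) : (2 : ℝ) < 2 ^ r := by
  simpa using Real.rpow_lt_rpow_of_exponent_lt (by norm_num : (1 : ℝ) < 2) hr

lemma tendsto_ratio_pow {r : ℝ} (hr : 1 < r) (K : ℝ) :
    Filter.Tendsto (fun n : ℕ => (2 / (2 : ℝ) ^ r) ^ n * K) Filter.atTop (nhds 0) := by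
  have h2 := two_lt_two_rpow hr
  have := tendsto_pow_atTop_nhds_zero_of_lt_one (r := 2 / (2 : ℝ) ^ r) (by positivity)
    ((div_lt_one (by positivity)).2 h2)
  simpa using this.mul_const K

/-- A `ℂ`-homogeneous map that is `O(‖x‖ ^ r)` with `r > 1` is zero: compare orders of
vanishing along `x / 2 ^ n`. -/
lemma eq_zero_of_bound {X Y : Type*} [NormedAddCommGroup X] [NormedSpace ℂ X]
    [NormedAddCommGroup Y] [NormedSpace ℂ Y] {r : ℝ} (hr : 1 < r) (φ : X → Y) (K : ℝ)
    (hhom : ∀ (c : ℂ) x, φ (c • x) = c • φ x) (hb : ∀ x, ‖φ x‖ ≤ K * ‖x‖ ^ r) (x : X) :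
    φ x = 0 := by
  have hle : ∀ n : ℕ, ‖φ x‖ ≤ (2 / (2 : ℝ) ^ r) ^ n * (K * ‖x‖ ^ r) := by
    intro n
    have h := hb (((2 : ℂ)⁻¹ ^ n) • x)
    rw [hhom, norm_smul, norm_half_pow_smul_rpow, norm_pow, norm_inv,
      show ‖(2 : ℂ)‖ = 2 by simp] at h
    have h' := mul_le_mul_of_nonneg_left h (by positivity : (0 : ℝ) ≤ 2 ^ n)
    rw [← mul_assoc, ← mul_pow, mul_inv_cancel₀ (two_ne_zero), one_pow, one_mul] at h'
    rw [div_eq_mul_inv, mul_pow]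
    linarith
  have := ge_of_tendsto' (tendsto_ratio_pow hr (K * ‖x‖ ^ r)) hle
  exact norm_le_zero_iff.1 this

/-- Hyers' direct method: approximate doubling in the first variable produces a limit map
near `f`. -/
lemma exists_limit {X Y : Type*} [NormedAddCommGroup X] [NormedSpace ℂ X]
    [NormedAddCommGroup Y] [NormedSpace ℂ Y] [CompleteSpace Y] {r θ : ℝ} (hr : 1 < r)
    (f : X → X → X → Y)
    (h : ∀ x z a, ‖f ((2 : ℂ) • x) z a - (2 : ℂ) • f x z a‖
      ≤ 2 * θ * (‖x‖ ^ r * ‖z‖ ^ r * ‖a‖ ^ r)) :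
    ∃ D : X → X → X → Y,
      (∀ x z a, Filter.Tendsto (fun n : ℕ => ((2 : ℂ) ^ n) • f (((2 : ℂ)⁻¹ ^ n) • x) z a)
        Filter.atTop (nhds (D x z a))) ∧
      ∀ x z a, ‖f x z a - D x z a‖
        ≤ 2 * θ / ((2 : ℝ) ^ r - 2) * (‖x‖ ^ r * ‖z‖ ^ r * ‖a‖ ^ r) := by
  have h2 := two_lt_two_rpow hr
  have hq : 2 / (2 : ℝ) ^ r < 1 := (div_lt_one (by positivity)).2 h2
  have hstep : ∀ x z a, ∀ n : ℕ,
      dist (((2 : ℂ) ^ n) • f (((2 : ℂ)⁻¹ ^ n) • x) z a)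
        (((2 : ℂ) ^ (n + 1)) • f (((2 : ℂ)⁻¹ ^ (n + 1)) • x) z a)
      ≤ (2 * θ / (2 : ℝ) ^ r * (‖x‖ ^ r * ‖z‖ ^ r * ‖a‖ ^ r)) * (2 / (2 : ℝ) ^ r) ^ n := by
    intro x z a n
    have h1 := h (((2 : ℂ)⁻¹ ^ (n + 1)) • x) z a
    have e : (2 : ℂ) • ((2 : ℂ)⁻¹ ^ (n + 1)) • x = ((2 : ℂ)⁻¹ ^ n) • x := by
      rw [smul_smul, pow_succ']
      simp
    rw [e, norm_half_pow_smul_rpow] at h1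
    rw [dist_eq_norm, pow_succ (2 : ℂ) n, mul_smul, ← smul_sub, norm_smul, norm_pow,
      show ‖(2 : ℂ)‖ = 2 by simp]
    refine (mul_le_mul_of_nonneg_left h1 (by positivity)).trans (le_of_eq ?_)
    rw [div_pow, pow_succ, inv_pow]
    field_simp
  have hlim : ∀ x z a, ∃ d, Filter.Tendsto
      (fun n : ℕ => ((2 : ℂ) ^ n) • f (((2 : ℂ)⁻¹ ^ n) • x) z a) Filter.atTop (nhds d) :=
    fun x z a => cauchySeq_tendsto_of_complete (cauchySeq_of_le_geometric _ _ hq (hstep x z a))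
  choose D hD using hlim
  refine ⟨D, hD, fun x z a => ?_⟩
  have := dist_le_of_le_geometric_of_tendsto₀ _ _ hq (hstep x z a) (hD x z a)
  simp only [pow_zero, one_smul, dist_eq_norm] at this
  refine this.trans (le_of_eq ?_)
  have : (2 : ℝ) ^ r - 2 ≠ 0 := by linarith
  have : 1 - 2 / (2 : ℝ) ^ r ≠ 0 := by linarith
  field_simp

lemma CTrilinear.smul_update {X Y : Type*} [AddCommGroup X] [Module ℂ X] [AddCommGroup Y]
    [Module ℂ Y] {E : X → X → X → Y} (hE : CTrilinear E) {p q k : Fin 3} (hpq : p ≠ q)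
    (hpk : p ≠ k) (hqk : q ≠ k) (x : Fin 3 → X) (c : ℂ) (t : X) :
    E (Function.update x 0 (c • t) p) (Function.update x 0 (c • t) q)
        (Function.update x 0 (c • t) k)
      = c • E (Function.update x 0 t p) (Function.update x 0 t q) (Function.update x 0 t k) := by
  by_cases hp : p = 0
  · subst hp
    simp only [Function.update_self, Function.update_of_ne hpq.symm, Function.update_of_ne hpk.symm]
    exact hE.2.1 _ _ _ _
  by_cases hq : q = 0
  · subst hq
    simp only [Function.update_self, Function.update_of_ne hpq, Function.update_of_ne hqk.symm]
    exact hE.2.2.1 _ _ _ _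
  obtain rfl : k = 0 := by omega
  simp only [Function.update_self, Function.update_of_ne hp, Function.update_of_ne hq]
  exact hE.2.2.2 _ _ _ _

theorem stmt_11 (s : ℂ) (hs0 : s ≠ 0) (hs1 : ‖s‖ < 1) (r θ : ℝ) (hr : 2 < r) (hθ : 0 ≤ θ)
    (f : A → A → A → A)
    (hzero : ∀ x z a : A, f x 0 a = 0 ∧ f 0 z a = 0 ∧ f x z 0 = 0)
    (hineq : ∀ l m e : ℂ, ‖l‖ = 1 → ‖m‖ = 1 → ‖e‖ = 1 → ∀ x y z w a b : A,
      ‖f (l • (x + y)) (m • (z - w)) (e • (a + b))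
          + f (l • (x - y)) (m • (z + w)) (e • (a - b))
          - (l * m * e) • ((2 : ℂ) • f x z a - (2 : ℂ) • f x w b
              + (2 : ℂ) • f y z b - (2 : ℂ) • f y w a)‖
        ≤ ‖s • D₂ f x y z w a b‖ + θ * (‖x‖ ^ r + ‖y‖ ^ r) * (‖z‖ ^ r + ‖w‖ ^ r) * (‖a‖ ^ r + ‖b‖ ^ r)) :
    (∃! D : A → A → A → A, CTrilinear D ∧
      ∀ x z a : A, ‖f x z a - D x z a‖ ≤ 2 * θ / ((2 : ℝ) ^ r - 2) * (‖x‖ ^ r * ‖z‖ ^ r * ‖a‖ ^ r)) ∧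
    ((∀ (σ : Equiv.Perm (Fin 3)) (x : Fin 3 → A),
      ‖f (x (σ 0)) (x (σ 1)) (x (σ 2)) - f (x 0) (x 1) (x 2)‖
        ≤ θ * ‖x 0‖ ^ r * ‖x 1‖ ^ r * ‖x 2‖ ^ r) →
     (∀ u : A, u ∈ unitary A → ∀ y z a : A,
      ‖f (u * y) z a - f u z a * y - u * f y z a‖
        ≤ θ * (1 + ‖y‖ ^ r) * ‖z‖ ^ r * ‖a‖ ^ r) →
     ∀ D : A → A → A → A,
       (CTrilinear D ∧ ∀ x z a : A, ‖f x z a - D x z a‖ ≤ 2 * θ / ((2 : ℝ) ^ r - 2) * (‖x‖ ^ r * ‖z‖ ^ r * ‖a‖ ^ r)) →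
       PermutingTriderivation D) := by
  have hr1 : 1 < r := by linarith
  have hr0 : r ≠ 0 := by linarith
  have hz1 : ∀ z a, f 0 z a = 0 := fun z a => (hzero 0 z a).2.1
  have hz2 : ∀ x a, f x 0 a = 0 := fun x a => (hzero x 0 a).1
  have hz3 : ∀ x z, f x z 0 = 0 := fun x z => (hzero x z 0).2.2
  have hdouble : ∀ x z a, ‖f ((2 : ℂ) • x) z a - (2 : ℂ) • f x z a‖
      ≤ 2 * θ * (‖x‖ ^ r * ‖z‖ ^ r * ‖a‖ ^ r) := by
    intro x z a
    have h := hineq 1 1 1 (by simp) (by simp) (by simp) x x z 0 a 0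
    have e : (2 : ℂ)⁻¹ • (x + x) = x := by module
    simp only [D₂, e, hz1, hz2, hz3, one_smul, sub_zero, add_zero, sub_self, smul_zero, norm_zero,
      mul_one, Real.zero_rpow hr0, zero_add] at h
    rw [two_smul ℂ x]
    exact h.trans (le_of_eq (by ring))
  obtain ⟨D, hD, hDf⟩ := exists_limit hr1 f hdouble
  have hd1 : ∀ z a, D 0 z a = 0 := fun z a =>
    tendsto_nhds_unique (hD 0 z a) (by simp [hz1])
  have hd2 : ∀ x a, D x 0 a = 0 := fun x a =>
    tendsto_nhds_unique (hD x 0 a) (by simp [hz2])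
  have hd3 : ∀ x z, D x z 0 = 0 := fun x z =>
    tendsto_nhds_unique (hD x z 0) (by simp [hz3])
  have hhalf : ∀ x z a, (2 : ℂ) • D ((2 : ℂ)⁻¹ • x) z a = D x z a := by
    intro x z a
    refine tendsto_nhds_unique ?_ ((Filter.tendsto_add_atTop_iff_nat 1).2 (hD x z a))
    refine ((hD ((2 : ℂ)⁻¹ • x) z a).const_smul (2 : ℂ)).congr fun n => ?_
    rw [smul_smul, smul_smul, ← pow_succ', ← pow_succ]
  have hlimineq : ∀ l m e : ℂ, ‖l‖ = 1 → ‖m‖ = 1 → ‖e‖ = 1 → ∀ x y z w a b : A,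
      ‖D (l • (x + y)) (m • (z - w)) (e • (a + b))
          + D (l • (x - y)) (m • (z + w)) (e • (a - b))
          - (l * m * e) • ((2 : ℂ) • D x z a - (2 : ℂ) • D x w b
              + (2 : ℂ) • D y z b - (2 : ℂ) • D y w a)‖
        ≤ ‖s • D₂ D x y z w a b‖ := by
    intro l m e hl hm he x y z w a b
    set g : ℕ → A → A → A → A := fun n x z a => ((2 : ℂ) ^ n) • f (((2 : ℂ)⁻¹ ^ n) • x) z a
    have hg : ∀ x z a, Filter.Tendsto (fun n => g n x z a) Filter.atTop (nhds (D x z a)) := hD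
    have hL := ((((hg (l • (x + y)) (m • (z - w)) (e • (a + b))).add
      (hg (l • (x - y)) (m • (z + w)) (e • (a - b)))).sub
      ((((((hg x z a).const_smul (2 : ℂ)).sub ((hg x w b).const_smul (2 : ℂ))).add
      ((hg y z b).const_smul (2 : ℂ))).sub
      ((hg y w a).const_smul (2 : ℂ))).const_smul (l * m * e)))).norm
    have hR0 : Filter.Tendsto (fun n => D₂ (g n) x y z w a b) Filter.atTop
        (nhds (D₂ D x y z w a b)) := by
      unfold D₂
      exact ((((((hg _ _ _).const_smul (2 : ℂ)).add ((hg _ _ _).const_smul (2 : ℂ))).sub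
        ((hg _ _ _).const_smul (2 : ℂ))).add ((hg _ _ _).const_smul (2 : ℂ))).sub
        ((hg _ _ _).const_smul (2 : ℂ))).add ((hg _ _ _).const_smul (2 : ℂ))
    have hR := ((hR0.const_smul s).norm).add (tendsto_ratio_pow hr1
      (θ * (‖x‖ ^ r + ‖y‖ ^ r) * (‖z‖ ^ r + ‖w‖ ^ r) * (‖a‖ ^ r + ‖b‖ ^ r)))
    rw [add_zero] at hR
    refine le_of_tendsto_of_tendsto' hL hR fun n => ?_
    have h := hineq l m e hl hm he (((2 : ℂ)⁻¹ ^ n) • x) (((2 : ℂ)⁻¹ ^ n) • y) z w a b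
    rw [norm_half_pow_smul_rpow, norm_half_pow_smul_rpow, ← smul_add, ← smul_sub,
      smul_comm l, smul_comm l] at h
    have h' := mul_le_mul_of_nonneg_left h (norm_nonneg ((2 : ℂ) ^ n))
    have eD : D₂ (g n) x y z w a b
        = (2 : ℂ) ^ n • D₂ f (((2 : ℂ)⁻¹ ^ n) • x) (((2 : ℂ)⁻¹ ^ n) • y) z w a b := by
      simp only [D₂, g, ← smul_add, ← smul_sub]
      rw [smul_comm ((2 : ℂ)⁻¹ ^ n), smul_comm ((2 : ℂ)⁻¹ ^ n) ((2 : ℂ)⁻¹)]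
      module
    rw [eD, smul_comm s]
    refine le_trans (le_of_eq ?_) (h'.trans (le_of_eq ?_))
    · rw [← norm_smul]
      congr 1
      simp only [g]
      module
    · rw [mul_add, ← norm_smul, norm_pow, show ‖(2 : ℂ)‖ = 2 by simp, div_pow,
        inv_pow ((2 : ℝ) ^ r)]
      generalize ‖(2 : ℂ) ^ n • s • D₂ f (((2 : ℂ)⁻¹ ^ n) • x) (((2 : ℂ)⁻¹ ^ n) • y) z w a b‖ = N
      field_simp
  have hD2 : ∀ x y z w a b, D₂ D x y z w a b = 0 := by
    intro x y z w a b
    have h := hlimineq 1 1 1 (by simp) (by simp) (by simp) x y z w a b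
    have e : D (x + y) (z - w) (a + b) + D (x - y) (z + w) (a - b)
          - ((2 : ℂ) • D x z a - (2 : ℂ) • D x w b + (2 : ℂ) • D y z b - (2 : ℂ) • D y w a)
        = D₂ D x y z w a b := by
      simp only [D₂, hhalf]
      abel
    simp only [one_smul, mul_one] at h
    rw [e, norm_smul] at h
    refine norm_le_zero_iff.1 ?_
    nlinarith [norm_nonneg (D₂ D x y z w a b)]
  have heq : ∀ l m e : ℂ, ‖l‖ = 1 → ‖m‖ = 1 → ‖e‖ = 1 → ∀ x y z w a b : A,
      D (l • (x + y)) (m • (z - w)) (e • (a + b)) + D (l • (x - y)) (m • (z + w)) (e • (a - b))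
        = (l * m * e) • ((2 : ℂ) • D x z a - (2 : ℂ) • D x w b
              + (2 : ℂ) • D y z b - (2 : ℂ) • D y w a) := by
    intro l m e hl hm he x y z w a b
    have h := hlimineq l m e hl hm he x y z w a b
    rw [hD2, smul_zero, norm_zero] at h
    exact sub_eq_zero.1 (norm_le_zero_iff.1 h)
  have n1 : ‖(1 : ℂ)‖ = 1 := by simp
  have ha1 : ∀ x x' z a, D (x + x') z a = D x z a + D x' z a := fun x x' z a =>
    additive_of_jensen (fun x => D x z a) (hd1 z a) (fun x y => by
      simpa [hd1, hd2, hd3] using heq 1 1 1 n1 n1 n1 x y z 0 a 0) x x'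
  have ha2 : ∀ x z z' a, D x (z + z') a = D x z a + D x z' a := fun x z z' a =>
    additive_of_jensen (fun z => D x z a) (hd2 x a) (fun z w => by
      simpa [hd1, hd2, hd3, add_comm] using heq 1 1 1 n1 n1 n1 x 0 z w a 0) z z'
  have ha3 : ∀ x z a a', D x z (a + a') = D x z a + D x z a' := fun x z a a' =>
    additive_of_jensen (fun a => D x z a) (hd3 x z) (fun a b => by
      simpa [hd1, hd2, hd3] using heq 1 1 1 n1 n1 n1 x 0 z 0 a b) a a'
  have hunim : ∀ l m e : ℂ, ‖l‖ = 1 → ‖m‖ = 1 → ‖e‖ = 1 → ∀ x z a : A,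
      D (l • x) (m • z) (e • a) = (l * m * e) • D x z a := by
    intro l m e hl hm he x z a
    have h := heq l m e hl hm he x 0 z 0 a 0
    simp only [hd1, hd2, add_zero, sub_zero, smul_zero] at h
    rw [← two_smul ℂ, smul_comm] at h
    exact (smul_right_injective A (two_ne_zero : (2 : ℂ) ≠ 0)) h
  have hDtri : CTrilinear D := by
    refine ⟨⟨ha1, ha2, ha3⟩, fun c x z a => ?_, fun c x z a => ?_, fun c x z a => ?_⟩
    · exact smul_of_unimodular (fun x => D x z a) (fun x y => ha1 x y z a)
        (fun c hc x => by simpa using hunim c 1 1 hc n1 n1 x z a) c x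
    · exact smul_of_unimodular (fun z => D x z a) (fun z w => ha2 x z w a)
        (fun c hc z => by simpa using hunim 1 c 1 n1 hc n1 x z a) c z
    · exact smul_of_unimodular (fun a => D x z a) (fun a b => ha3 x z a b)
        (fun c hc a => by simpa using hunim 1 1 c n1 n1 hc x z a) c a
  set C : ℝ := 2 * θ / ((2 : ℝ) ^ r - 2) with hC
  refine ⟨⟨D, ⟨hDtri, hDf⟩, ?_⟩, ?_⟩
  · rintro E ⟨hE, hEf⟩
    funext x z a
    refine sub_eq_zero.1 (eq_zero_of_bound hr1 (fun x => E x z a - D x z a)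
      (2 * C * (‖z‖ ^ r * ‖a‖ ^ r)) (fun c x => ?_) (fun x => ?_) x)
    · simp only [hE.2.1, hDtri.2.1, smul_sub]
    · have h1 := hEf x z a
      have h2 := hDf x z a
      have h3 := norm_sub_le_norm_sub_add_norm_sub (E x z a) (f x z a) (D x z a)
      rw [norm_sub_rev (E x z a) (f x z a)] at h3
      linarith
  · intro hperm hder E ⟨hE, hEf⟩
    refine ⟨hE, ?_, ?_⟩
    · have hunit : ∀ u ∈ unitary A, ∀ y z a, E (u * y) z a = E u z a * y + u * E y z a := by
        intro u hu y z a
        have key := eq_zero_of_bound hr1 (fun z => E (u * y) z a - E u z a * y - u * E y z a)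
          (C * ‖u * y‖ ^ r * ‖a‖ ^ r + C * ‖u‖ ^ r * ‖a‖ ^ r * ‖y‖ + ‖u‖ * (C * ‖y‖ ^ r * ‖a‖ ^ r)
            + θ * (1 + ‖y‖ ^ r) * ‖a‖ ^ r) (fun c z => by
              simp only [hE.2.2.1, smul_sub, smul_mul_assoc, mul_smul_comm]) (fun z => ?_) z
        · rw [sub_sub] at key
          exact sub_eq_zero.1 key
        · have e : E (u * y) z a - E u z a * y - u * E y z a
              = (f (u * y) z a - f u z a * y - u * f y z a)
                - (f (u * y) z a - E (u * y) z a) + (f u z a - E u z a) * y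
                + u * (f y z a - E y z a) := by noncomm_ring
          have h1 := hEf (u * y) z a
          have h2 : ‖(f u z a - E u z a) * y‖ ≤ C * (‖u‖ ^ r * ‖z‖ ^ r * ‖a‖ ^ r) * ‖y‖ :=
            (norm_mul_le _ _).trans (mul_le_mul_of_nonneg_right (hEf u z a) (norm_nonneg _))
          have h3 : ‖u * (f y z a - E y z a)‖ ≤ ‖u‖ * (C * (‖y‖ ^ r * ‖z‖ ^ r * ‖a‖ ^ r)) :=
            (norm_mul_le _ _).trans (mul_le_mul_of_nonneg_left (hEf y z a) (norm_nonneg _))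
          have h4 := hder u hu y z a
          simp only [e]
          refine (norm_add₃_le).trans ?_
          have h5 := norm_sub_le (f (u * y) z a - f u z a * y - u * f y z a)
            (f (u * y) z a - E (u * y) z a)
          linarith
      intro x y z w
      let _ : CStarAlgebra A := {}
      have hx : x ∈ Submodule.span ℂ (unitary A : Set A) := by
        rw [CStarAlgebra.span_unitary]
        trivial
      induction hx using Submodule.span_induction with
      | mem u hu => exact hunit u hu y z w
      | zero =>
        have h0 : E 0 z w = 0 := by simpa using hE.2.1 0 0 z w
        simp [h0]
      | add u v _ _ hu hv =>
        rw [add_mul, hE.1.1, hu, hv, hE.1.1]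
        noncomm_ring
      | smul c u _ hu =>
        rw [smul_mul_assoc, hE.2.1, hu, hE.2.1, smul_add, smul_mul_assoc, smul_mul_assoc]
    · intro σ x
      -- Only the entry `x 0` is scaled; it occupies position `σ⁻¹ 0` on the permuted side.
      let v : A → Fin 3 → A := fun t => Function.update x 0 t
      have hhom : ∀ p q k : Fin 3, p ≠ q → p ≠ k → q ≠ k → ∀ (c : ℂ) (t : A),
          E (v (c • t) p) (v (c • t) q) (v (c • t) k) = c • E (v t p) (v t q) (v t k) := by
        intro p q k hpq hpk hqk c t
        exact hE.smul_update hpq hpk hqk x c t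
      have hne : ∀ i j : Fin 3, i ≠ j → σ i ≠ σ j := fun i j h h' => h (σ.injective h')
      have key := eq_zero_of_bound hr1
        (fun t => E (v t (σ 0)) (v t (σ 1)) (v t (σ 2)) - E (v t 0) (v t 1) (v t 2))
        ((2 * C + θ) * (‖x 1‖ ^ r * ‖x 2‖ ^ r)) (fun c t => ?_) (fun t => ?_) (x 0)
      · simp only [v, Function.update_eq_self] at key
        exact sub_eq_zero.1 key
      · rw [hhom _ _ _ (hne 0 1 (by decide)) (hne 0 2 (by decide)) (hne 1 2 (by decide)),
          hhom 0 1 2 (by decide) (by decide) (by decide), smul_sub]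
      · have h1 := hEf (v t (σ 0)) (v t (σ 1)) (v t (σ 2))
        have h2 := hEf (v t 0) (v t 1) (v t 2)
        have h3 := hperm σ (v t)
        have hprod := Equiv.prod_comp σ (fun i => ‖v t i‖ ^ r)
        rw [Fin.prod_univ_three, Fin.prod_univ_three] at hprod
        rw [hprod] at h1
        have v0 : v t 0 = t := by simp [v]
        have v1 : v t 1 = x 1 := by simp [v]
        have v2 : v t 2 = x 2 := by simp [v]
        have e : E (v t (σ 0)) (v t (σ 1)) (v t (σ 2)) - E (v t 0) (v t 1) (v t 2)
            = (f (v t (σ 0)) (v t (σ 1)) (v t (σ 2)) - f (v t 0) (v t 1) (v t 2))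
              - (f (v t (σ 0)) (v t (σ 1)) (v t (σ 2)) - E (v t (σ 0)) (v t (σ 1)) (v t (σ 2)))
              + (f (v t 0) (v t 1) (v t 2) - E (v t 0) (v t 1) (v t 2)) := by abel
        have h4 := norm_add_le
          ((f (v t (σ 0)) (v t (σ 1)) (v t (σ 2)) - f (v t 0) (v t 1) (v t 2))
            - (f (v t (σ 0)) (v t (σ 1)) (v t (σ 2)) - E (v t (σ 0)) (v t (σ 1)) (v t (σ 2))))
          (f (v t 0) (v t 1) (v t 2) - E (v t 0) (v t 1) (v t 2))
        have h5 := norm_sub_le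
          (f (v t (σ 0)) (v t (σ 1)) (v t (σ 2)) - f (v t 0) (v t 1) (v t 2))
          (f (v t (σ 0)) (v t (σ 1)) (v t (σ 2)) - E (v t (σ 0)) (v t (σ 1)) (v t (σ 2)))
        simp only [e]
        simp only [v0, v1, v2] at h1 h2 h3 h4 h5 ⊢
        linarith
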